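/- Let $A \in \mathbb{Z}^{m \times n}$ and $b \in \mathbb{Z}^m$ with $m \le n$, and let $L$ be any natural number with $L \ge \sum_{i,j} \lceil \log_2(|a_{ij}|+1) \rceil + \sum_j \lceil \log_2(|b_j|+1) \rceil$. Suppose $B \subseteq \{1,\dots,n\}$ with $|B| = m$ is such that the $m \times m$ submatrix $A_B$ of columns of $A$ indexed by $B$ is invertible, and let $x \in \mathbb{R}^n$ be the associated basic solution, i.e., $x_B = A_B^{-1} b$ and $x_j = 0$ for $j \notin B$. Then for every index $i$, if $x_i > 0$ then $x_i \ge 2^{-L}$. -/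

import Mathlib

open Matrix BigOperators

/-!
By Cramer's rule, `det A_B • x_B` is an integer vector, so a nonzero coordinate of `x` is at least
`1 / |det A_B|` in absolute value. Dropping the signs in the Leibniz formula and summing over all
functions instead of permutations bounds `|det A_B|` by the product of the column sums of absolute
values, hence by the product of `1 + |a_ij| ≤ 2 ^ ⌈log₂ (|a_ij| + 1)⌉` over the entries of `A_B`.
-/

theorem one_add_sum_le_prod_one_add {ι R : Type*} [CommSemiring R] [PartialOrder R]
    [IsOrderedRing R] {f : ι → R} (s : Finset ι) (hf : ∀ i ∈ s, 0 ≤ f i) :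
    1 + ∑ i ∈ s, f i ≤ ∏ i ∈ s, (1 + f i) := by
  induction s using Finset.cons_induction with
  | empty => simp
  | cons a s ha ih =>
    rw [Finset.forall_mem_cons] at hf
    have hsum : 0 ≤ ∑ i ∈ s, f i := Finset.sum_nonneg hf.2
    rw [Finset.sum_cons, Finset.prod_cons]
    calc 1 + (f a + ∑ i ∈ s, f i)
        ≤ 1 + (f a + ∑ i ∈ s, f i) + f a * ∑ i ∈ s, f i :=
          le_add_of_nonneg_right (mul_nonneg hf.1 hsum)
      _ = (1 + f a) * (1 + ∑ i ∈ s, f i) := by ring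
      _ ≤ (1 + f a) * ∏ i ∈ s, (1 + f i) :=
          mul_le_mul_of_nonneg_left (ih hf.2) (add_nonneg zero_le_one hf.1)

theorem sum_comp_le_sum_of_injective {ι κ R : Type*} [Fintype ι] [Fintype κ] [AddCommMonoid R]
    [PartialOrder R] [IsOrderedAddMonoid R] {φ : ι → κ} (hφ : φ.Injective) {f : κ → R}
    (hf : ∀ j, 0 ≤ f j) : ∑ i, f (φ i) ≤ ∑ j, f j :=
  (Finset.sum_map Finset.univ ⟨φ, hφ⟩ f).symm.trans_le (Finset.sum_le_univ_sum_of_nonneg hf)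

section Determinant

variable {m : Type*} [Fintype m] [DecidableEq m]

section AbsoluteValue

variable {R S : Type*} [CommRing R] [Nontrivial R] [CommRing S] [LinearOrder S]
  [IsStrictOrderedRing S]

theorem abv_det_le_prod_sum (abv : AbsoluteValue R S) (M : Matrix m m R) :
    abv M.det ≤ ∏ j, ∑ i, abv (M i j) :=
  calc abv M.det
      ≤ ∑ σ : Equiv.Perm m, abv (σ.sign • ∏ j, M (σ j) j) := by
        rw [det_apply]
        exact abv.sum_le _ _
    _ = ∑ σ : Equiv.Perm m, ∏ j, abv (M (σ j) j) := by
        simp only [abv.map_units_int_smul, map_prod]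
    _ ≤ ∑ g : m → m, ∏ j, abv (M (g j) j) :=
        sum_comp_le_sum_of_injective (f := fun g : m → m ↦ ∏ j, abv (M (g j) j))
          Equiv.coe_fn_injective
          fun g ↦ Finset.prod_nonneg fun j _ ↦ abv.nonneg _
    _ = ∏ j, ∑ i, abv (M i j) := by rw [Finset.prod_univ_sum, Fintype.piFinset_univ]

theorem abv_det_le_prod_prod_one_add (abv : AbsoluteValue R S) (M : Matrix m m R) :
    abv M.det ≤ ∏ j, ∏ i, (1 + abv (M i j)) :=
  (abv_det_le_prod_sum abv M).trans <|
    Finset.prod_le_prod (fun _ _ ↦ Finset.sum_nonneg fun _ _ ↦ abv.nonneg _) fun _ _ ↦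
      (le_add_of_nonneg_left zero_le_one).trans <|
        one_add_sum_le_prod_one_add _ fun _ _ ↦ abv.nonneg _

end AbsoluteValue

theorem abs_det_le_two_pow_sum_clog (M : Matrix m m ℤ) :
    |M.det| ≤ 2 ^ ∑ i, ∑ j, Nat.clog 2 ((M i j).natAbs + 1) := by
  have one_add_abs_le (a : ℤ) : 1 + |a| ≤ 2 ^ Nat.clog 2 (a.natAbs + 1) := by
    rw [add_comm, ← Int.natCast_natAbs]
    exact_mod_cast Nat.le_pow_clog one_lt_two (a.natAbs + 1)
  calc |M.det|
      ≤ ∏ j, ∏ i, (1 + |M i j|) := abv_det_le_prod_prod_one_add AbsoluteValue.abs M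
    _ ≤ ∏ j, ∏ i, 2 ^ Nat.clog 2 ((M i j).natAbs + 1) := by
        gcongr
        exact one_add_abs_le _
    _ = 2 ^ ∑ i, ∑ j, Nat.clog 2 ((M i j).natAbs + 1) := by
        rw [Finset.sum_comm]
        simp only [Finset.prod_pow_eq_pow_sum]

theorem abs_det_submatrix_le_two_pow_sum_clog {n : Type*} [Fintype n] (A : Matrix m n ℤ)
    (φ : m → n) :
    |(A.submatrix id φ).det| ≤ 2 ^ ∑ i, ∑ j, Nat.clog 2 ((A i j).natAbs + 1) := by
  by_cases hφ : φ.Injective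
  · refine (abs_det_le_two_pow_sum_clog _).trans (pow_le_pow_right₀ one_le_two ?_)
    exact Finset.sum_le_sum fun i _ ↦
      sum_comp_le_sum_of_injective (f := fun j ↦ Nat.clog 2 ((A i j).natAbs + 1)) hφ
        fun _ ↦ Nat.zero_le _
  · obtain ⟨k, l, hkl, hne⟩ := Function.not_injective_iff.mp hφ
    have hdet : (A.submatrix id φ).det = 0 :=
      det_zero_of_column_eq hne fun i ↦ congrArg (A i) hkl
    simp [hdet]

theorem det_smul_eq_cramer_of_mulVec_eq {R : Type*} [CommRing R] {M : Matrix m m R} {x b : m → R}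
    (h : M *ᵥ x = b) : M.det • x = M.cramer b := by
  rw [← h, cramer_eq_adjugate_mulVec, mulVec_mulVec, adjugate_mul, smul_mulVec, one_mulVec]

theorem cramer_map {R S : Type*} [CommRing R] [CommRing S] (f : R →+* S) (M : Matrix m m R)
    (b : m → R) : (M.map f).cramer (f ∘ b) = f ∘ M.cramer b := by
  ext k
  simp only [cramer_apply, Function.comp_apply, f.map_det, RingHom.mapMatrix_apply, map_updateCol]

theorem one_le_abs_det_mul_abs_of_mulVec_eq {K : Type*} [CommRing K] [LinearOrder K]
    [IsStrictOrderedRing K] {M : Matrix m m ℤ} {b : m → ℤ} {x : m → K} (hM : M.det ≠ 0)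
    (h : M.map (Int.cast : ℤ → K) *ᵥ x = fun i ↦ (b i : K)) {k : m} (hk : x k ≠ 0) :
    1 ≤ |(M.det : K)| * |x k| := by
  have cramer_rule : (M.det : K) * x k = (M.cramer b k : ℤ) := by
    rw [Int.cast_det]
    exact (congrFun (det_smul_eq_cramer_of_mulVec_eq h) k).trans
      (congrFun (cramer_map (Int.castRingHom K) M b) k)
  have cramer_ne_zero : M.cramer b k ≠ 0 := by
    rw [← Int.cast_ne_zero (α := K), ← cramer_rule]
    exact mul_ne_zero (Int.cast_ne_zero.mpr hM) hk
  rw [← abs_mul, cramer_rule]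
  exact_mod_cast Int.one_le_abs cramer_ne_zero

end Determinant

theorem basic_solution_lower_bound_general {m n K : Type*} [Fintype m] [DecidableEq m] [Fintype n]
    [Field K] [LinearOrder K] [IsStrictOrderedRing K]
    (A : Matrix m n ℤ) (b : m → ℤ) (L : ℕ)
    (hL : ∑ i, ∑ j, Nat.clog 2 ((A i j).natAbs + 1) ≤ L) (φ : m → n)
    (hinv : IsUnit ((A.map (Int.cast : ℤ → K)).submatrix id φ)) (x : n → K)
    (hxB : (A.map (Int.cast : ℤ → K)).submatrix id φ *ᵥ (fun k ↦ x (φ k)) = fun i ↦ (b i : K))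
    (hx0 : ∀ j, j ∉ Set.range φ → x j = 0) (i : n) (hi : x i ≠ 0) :
    (2 : K) ^ (-(L : ℤ)) ≤ |x i| := by
  obtain ⟨k, rfl⟩ : i ∈ Set.range φ := not_imp_comm.mp (hx0 i) hi
  rw [submatrix_map] at hinv hxB
  have hdet : (A.submatrix id φ).det ≠ 0 := by
    rw [← Int.cast_ne_zero (α := K), Int.cast_det]
    exact ((isUnit_iff_isUnit_det _).mp hinv).ne_zero
  have hdet_le : |((A.submatrix id φ).det : K)| ≤ 2 ^ L := by
    exact_mod_cast (abs_det_submatrix_le_two_pow_sum_clog A φ).trans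
      (pow_le_pow_right₀ one_le_two hL)
  rw [_root_.zpow_neg, _root_.zpow_natCast, inv_le_iff_one_le_mul₀' (by positivity)]
  calc 1 ≤ |((A.submatrix id φ).det : K)| * |x (φ k)| :=
        one_le_abs_det_mul_abs_of_mulVec_eq hdet hxB hi
    _ ≤ 2 ^ L * |x (φ k)| := by gcongr

/-- **Khachiyan's bound, primal half.** If `A ∈ ℤ^{m×n}`, `b ∈ ℤ^m`, `m ≤ n`, and
`L ≥ ∑_{i,j} ⌈log₂(|a_ij|+1)⌉ + ∑_j ⌈log₂(|b_j|+1)⌉`, then every positive entry of a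
basic solution `x` (supported on a basis `B = range φ` with `A_B` invertible and
`A_B x_B = b`) satisfies `x_i ≥ 2^{-L}`. -/
theorem basic_solution_lower_bound
    (m n : ℕ) (hmn : m ≤ n)
    (A : Matrix (Fin m) (Fin n) ℤ) (b : Fin m → ℤ) (L : ℕ)
    (hL : (∑ i, ∑ j, Nat.clog 2 ((A i j).natAbs + 1))
            + (∑ j, Nat.clog 2 ((b j).natAbs + 1)) ≤ L)
    (φ : Fin m → Fin n) (hφ : Function.Injective φ)
    (hinv : IsUnit ((A.map (Int.cast : ℤ → ℝ)).submatrix id φ))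
    (x : Fin n → ℝ)
    (hxB : ((A.map (Int.cast : ℤ → ℝ)).submatrix id φ).mulVec (fun k => x (φ k))
            = fun i => (b i : ℝ))
    (hx0 : ∀ j, j ∉ Set.range φ → x j = 0) :
    ∀ i, 0 < x i → (2 : ℝ) ^ (-(L : ℤ)) ≤ x i := by
  intro i hi
  simpa only [abs_of_pos hi] using
    basic_solution_lower_bound_general A b L (le_of_add_le_left hL) φ hinv x hxB hx0 i hi.ne'
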